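/- arXiv:1409.7499 — 2 statements merged into one kernel-verified Lean document; each statement's English description precedes it below -/
import Mathlib

section
/- Let r₂ > 0 and let F : ℝ^{3×3} → ℝ be twice continuously differentiable with F(0) = 0. Suppose Q : ℝ³ → ℝ^{3×3} is twice continuously differentiable, Q(x) is symmetric and traceless and |Q(x)| ≤ r₂ for every x ∈ ℝ³, Q solves the stationary equation −ΔQ(x) + L[∇F(Q(x))] = 0 for all x ∈ ℝ³, and the functions x ↦ |∇Q(x)|² and x ↦ F(Q(x)) are Lebesgue integrable on ℝ³. Then the Pochožaev identity ∫_{ℝ³} ( (1/2)|∇Q(x)|² + 3 F(Q(x)) ) dx = 0 holds. -/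
open MeasureTheory Matrix

noncomputable section

/-- `ℝ³` with the Euclidean norm. -/
abbrev E3 : Type := EuclideanSpace ℝ (Fin 3)
/-- the space of `3×3` real matrices -/
abbrev Mat : Type := Matrix (Fin 3) (Fin 3) ℝ

attribute [local instance] Matrix.normedAddCommGroup Matrix.normedSpace

/-- Frobenius inner product `A : B`. -/
def frob (A B : Mat) : ℝ := ∑ i, ∑ j, A i j * B i j
/-- Frobenius norm `|A|`. -/
def frobNorm (A : Mat) : ℝ := Real.sqrt (frob A A)
/-- `L[A] = A - (1/3) tr A · I`, projection onto traceless matrices. -/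
def tracelessPart (A : Mat) : Mat := A - (Matrix.trace A / 3) • (1 : Mat)
/-- partial derivative `∂ₖ f` of a scalar function on `ℝ³` -/
def pd (k : Fin 3) (f : E3 → ℝ) (x : E3) : ℝ := fderiv ℝ f x (EuclideanSpace.single k 1)
/-- componentwise Laplacian `ΔQ` of a matrix-valued map -/
def lapM (Q : E3 → Mat) (x : E3) : Mat :=
  Matrix.of fun i j => ∑ k, pd k (fun y => pd k (fun z => Q z i j) y) x
/-- `|∇Q(x)|² = Σ_{k,i,j} (∂ₖ Q_{ij}(x))²` -/
def gradNormSq (Q : E3 → Mat) (x : E3) : ℝ := ∑ k, ∑ i, ∑ j, (pd k (fun y => Q y i j) x) ^ 2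
/-- Frobenius gradient `∇F(A)` of a function on matrices, with entries `∂F/∂A_{ij}`. -/
def matGrad (F : Mat → ℝ) (A : Mat) : Mat :=
  Matrix.of fun i j => fderiv ℝ F A (Matrix.single i j 1)

def qd (Q : E3 → Mat) (k i j : Fin 3) (x : E3) : ℝ := pd k (fun y => Q y i j) x

def ed (F : Mat → ℝ) (Q : E3 → Mat) (x : E3) : ℝ :=
  (∑ k, ∑ i, ∑ j, qd Q k i j x * qd Q k i j x) * (1/2) + F (Q x)

def Ts (F : Mat → ℝ) (Q : E3 → Mat) (k l : Fin 3) (x : E3) : ℝ :=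
  (∑ i, ∑ j, qd Q k i j x * qd Q l i j x) - (if k = l then 1 else 0) * ed F Q x

theorem comp_cd {Q : E3 → Mat} (hQ : ContDiff ℝ 2 Q) (i j : Fin 3) :
    ContDiff ℝ 2 (fun x => Q x i j) :=
  contDiff_pi.1 (contDiff_pi.1 hQ i) j

theorem qd_cd {Q : E3 → Mat} (hQ : ContDiff ℝ 2 Q) (k i j : Fin 3) :
    ContDiff ℝ 1 (qd Q k i j) := by
  have h := (comp_cd hQ i j).fderiv_right (m := 1) (by norm_num)
  exact h.clm_apply contDiff_const

theorem ed_cd {F : Mat → ℝ} (hF : ContDiff ℝ 2 F) {Q : E3 → Mat} (hQ : ContDiff ℝ 2 Q) :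
    ContDiff ℝ 1 (ed F Q) := by
  unfold ed
  refine ContDiff.add (ContDiff.mul ?_ contDiff_const) ((hF.comp hQ).of_le (by norm_num))
  exact ContDiff.sum fun k _ => ContDiff.sum fun i _ => ContDiff.sum fun j _ =>
    (qd_cd hQ k i j).mul (qd_cd hQ k i j)

theorem Ts_cd {F : Mat → ℝ} (hF : ContDiff ℝ 2 F) {Q : E3 → Mat} (hQ : ContDiff ℝ 2 Q)
    (k l : Fin 3) : ContDiff ℝ 1 (Ts F Q k l) := by
  unfold Ts
  refine ContDiff.sub ?_ (contDiff_const.mul (ed_cd hF hQ))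
  exact ContDiff.sum fun i _ => ContDiff.sum fun j _ =>
    (qd_cd hQ k i j).mul (qd_cd hQ l i j)

theorem pd_mul (k : Fin 3) {f g : E3 → ℝ} {x : E3} (hf : DifferentiableAt ℝ f x)
    (hg : DifferentiableAt ℝ g x) :
    pd k (fun y => f y * g y) x = pd k f x * g x + f x * pd k g x := by
  unfold pd
  rw [fderiv_fun_mul hf hg]
  simp
  ring

theorem pd_add (k : Fin 3) {f g : E3 → ℝ} {x : E3} (hf : DifferentiableAt ℝ f x)
    (hg : DifferentiableAt ℝ g x) :
    pd k (fun y => f y + g y) x = pd k f x + pd k g x := by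
  unfold pd
  rw [fderiv_fun_add hf hg]
  simp

theorem pd_sub (k : Fin 3) {f g : E3 → ℝ} {x : E3} (hf : DifferentiableAt ℝ f x)
    (hg : DifferentiableAt ℝ g x) :
    pd k (fun y => f y - g y) x = pd k f x - pd k g x := by
  unfold pd
  rw [fderiv_fun_sub hf hg]
  simp

theorem pd_cmul (k : Fin 3) (c : ℝ) {f : E3 → ℝ} {x : E3} (hf : DifferentiableAt ℝ f x) :
    pd k (fun y => c * f y) x = c * pd k f x := by
  unfold pd
  rw [fderiv_const_mul hf]
  simp

theorem pd_mulc (k : Fin 3) (c : ℝ) {f : E3 → ℝ} {x : E3} (hf : DifferentiableAt ℝ f x) :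
    pd k (fun y => f y * c) x = pd k f x * c := by
  unfold pd
  rw [fderiv_mul_const hf]
  simp [mul_comm]

theorem pd_sum (k : Fin 3) {f : Fin 3 → E3 → ℝ} {x : E3}
    (hf : ∀ i, DifferentiableAt ℝ (f i) x) :
    pd k (fun y => ∑ i, f i y) x = ∑ i, pd k (f i) x := by
  unfold pd
  rw [fderiv_fun_sum (fun i _ => hf i)]
  simp

theorem qd_symm {Q : E3 → Mat} (hQ : ContDiff ℝ 2 Q) (k l i j : Fin 3) (x : E3) :
    pd k (qd Q l i j) x = pd l (qd Q k i j) x := by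
  have hc := comp_cd hQ i j
  have hs : IsSymmSndFDerivAt ℝ (fun x => Q x i j) x :=
    hc.contDiffAt.isSymmSndFDerivAt (by simp)
  have hd : DifferentiableAt ℝ (fderiv ℝ (fun x => Q x i j)) x :=
    ((hc.fderiv_right (m := 1) (by norm_num)).differentiable (by norm_num)) x
  have key : ∀ a b : Fin 3, pd a (qd Q b i j) x =
      fderiv ℝ (fderiv ℝ (fun x => Q x i j)) x (EuclideanSpace.single a 1)
        (EuclideanSpace.single b 1) := by
    intro a b
    have h2 : qd Q b i j = fun y => fderiv ℝ (fun x => Q x i j) y (EuclideanSpace.single b 1) := rfl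
    unfold pd
    rw [h2, fderiv_clm_apply hd (differentiableAt_const _)]
    simp
  rw [key, key]
  exact hs _ _

theorem pd_comp {F : Mat → ℝ} (hF : ContDiff ℝ 2 F) {Q : E3 → Mat} (hQ : ContDiff ℝ 2 Q)
    (l : Fin 3) (x : E3) :
    pd l (fun y => F (Q y)) x = ∑ i, ∑ j, matGrad F (Q x) i j * qd Q l i j x := by
  have hFd : DifferentiableAt ℝ F (Q x) := (hF.differentiable (by norm_num)) _
  have hQd : DifferentiableAt ℝ Q x := (hQ.differentiable (by norm_num)) _
  have h1 : fderiv ℝ (fun y => F (Q y)) x = (fderiv ℝ F (Q x)).comp (fderiv ℝ Q x) :=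
    fderiv_comp x hFd hQd
  have h2 : ∀ i j, qd Q l i j x = (fderiv ℝ Q x (EuclideanSpace.single l 1)) i j := by
    intro i j
    have h3 : HasFDerivAt (fun y => Q y i j) 
      ((ContinuousLinearMap.proj (R := ℝ) (φ := fun _ : Fin 3 => ℝ) j).comp
       ((ContinuousLinearMap.proj (R := ℝ) (φ := fun _ : Fin 3 => Fin 3 → ℝ) i).comp
        (fderiv ℝ Q x))) x :=
      hasFDerivAt_pi'.1 (hasFDerivAt_pi'.1 hQd.hasFDerivAt i) j
    unfold qd pd
    rw [h3.fderiv]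
    rfl
  unfold pd
  rw [h1]
  simp only [h2, matGrad, ContinuousLinearMap.comp_apply, Matrix.of_apply]
  generalize fderiv ℝ Q x (EuclideanSpace.single l 1) = A
  conv_lhs => rw [Matrix.matrix_eq_sum_single A]
  simp only [map_sum]
  refine Finset.sum_congr rfl fun i _ => Finset.sum_congr rfl fun j _ => ?_
  have : Matrix.single i j (A i j) = A i j • Matrix.single i j (1:ℝ) := by
    simp [Matrix.smul_single]
  rw [this, map_smul, smul_eq_mul, mul_comm]

theorem qd_tr {Q : E3 → Mat} (hQ : ContDiff ℝ 2 Q) (htr : ∀ x, Matrix.trace (Q x) = 0)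
    (l : Fin 3) (x : E3) : ∑ i, qd Q l i i x = 0 := by
  unfold qd
  rw [← pd_sum (f := fun i y => Q y i i) l
    (fun i => ((comp_cd hQ i i).differentiable (by norm_num)) x)]
  have : (fun y => ∑ i, Q y i i) = fun _ => (0:ℝ) := by
    funext y; exact htr y
  rw [this]; simp [pd]

theorem Ts_div {F : Mat → ℝ} (hF : ContDiff ℝ 2 F) {Q : E3 → Mat} (hQ : ContDiff ℝ 2 Q)
    (htr : ∀ x, Matrix.trace (Q x) = 0)
    (heq : ∀ x, -lapM Q x + tracelessPart (matGrad F (Q x)) = 0) (l : Fin 3) (x : E3) :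
    ∑ k, pd k (Ts F Q k l) x = 0 := by
  have hq : ∀ k i j, DifferentiableAt ℝ (qd Q k i j) x := fun k i j =>
    ((qd_cd hQ k i j).differentiable (by norm_num)) x
  have he : DifferentiableAt ℝ (ed F Q) x := ((ed_cd hF hQ).differentiable (by norm_num)) x
  have hFQ : DifferentiableAt ℝ (fun y => F (Q y)) x :=
    ((hF.comp hQ).differentiable (by norm_num)) x
  have h1 : ∀ k, pd k (Ts F Q k l) x =
      (∑ i, ∑ j, (pd k (qd Q k i j) x * qd Q l i j x + qd Q k i j x * pd l (qd Q k i j) x))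
      - (if k = l then 1 else 0) * pd k (ed F Q) x := by
    intro k
    unfold Ts
    rw [pd_sub k (by fun_prop) (by fun_prop), pd_cmul k _ he, pd_sum k (by fun_prop)]
    congr 1
    refine Finset.sum_congr rfl fun i _ => ?_
    rw [pd_sum k (by fun_prop)]
    refine Finset.sum_congr rfl fun j _ => ?_
    rw [pd_mul k (hq _ _ _) (hq _ _ _), qd_symm hQ k l]
  have h2 : pd l (ed F Q) x = (∑ k, ∑ i, ∑ j, qd Q k i j x * pd l (qd Q k i j) x)
      + ∑ i, ∑ j, matGrad F (Q x) i j * qd Q l i j x := by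
    unfold ed
    rw [pd_add l (by fun_prop) hFQ, pd_mulc l _ (by fun_prop), pd_comp hF hQ,
      pd_sum l (by fun_prop), Finset.sum_mul]
    congr 1
    refine Finset.sum_congr rfl fun k _ => ?_
    rw [pd_sum l (by fun_prop), Finset.sum_mul]
    refine Finset.sum_congr rfl fun i _ => ?_
    rw [pd_sum l (by fun_prop), Finset.sum_mul]
    refine Finset.sum_congr rfl fun j _ => ?_
    rw [pd_mul l (hq _ _ _) (hq _ _ _)]
    ring
  have h3 : ∀ i j, ∑ k, pd k (qd Q k i j) x = tracelessPart (matGrad F (Q x)) i j := by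
    intro i j
    have := congrFun (congrFun (heq x) i) j
    have h4 : ∑ k, pd k (qd Q k i j) x = lapM Q x i j := rfl
    rw [h4]
    simp only [Matrix.add_apply, Matrix.neg_apply, Matrix.zero_apply] at this
    linarith
  have h5 : ∑ k, ∑ i, ∑ j, pd k (qd Q k i j) x * qd Q l i j x
      = ∑ i, ∑ j, matGrad F (Q x) i j * qd Q l i j x := by
    have hA : ∑ k, ∑ i, ∑ j, pd k (qd Q k i j) x * qd Q l i j x
       = ∑ i, ∑ j, tracelessPart (matGrad F (Q x)) i j * qd Q l i j x := by
      rw [Finset.sum_comm]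
      refine Finset.sum_congr rfl fun i _ => ?_
      rw [Finset.sum_comm]
      refine Finset.sum_congr rfl fun j _ => ?_
      rw [← h3, Finset.sum_mul]
    rw [hA]
    have := qd_tr hQ htr l x
    simp only [tracelessPart, Matrix.sub_apply, Matrix.smul_apply, sub_mul,
      Finset.sum_sub_distrib, smul_eq_mul, Matrix.one_apply, mul_ite, ite_mul, mul_one, mul_zero,
      zero_mul, Finset.sum_ite_eq, Finset.mem_univ, if_true, ← Finset.mul_sum, this, sub_zero]
  simp only [h1, Finset.sum_sub_distrib, Finset.sum_add_distrib, h5, ite_mul, one_mul, zero_mul,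
    Finset.sum_ite_eq', Finset.mem_univ, if_true, h2]
  ring

theorem gradNormSq_eq (Q : E3 → Mat) (x : E3) :
    gradNormSq Q x = ∑ k, ∑ i, ∑ j, qd Q k i j x * qd Q k i j x := by
  simp only [gradNormSq, qd, sq]

theorem qd_sq_le (Q : E3 → Mat) (k i j : Fin 3) (x : E3) :
    qd Q k i j x * qd Q k i j x ≤ gradNormSq Q x := by
  rw [gradNormSq_eq]
  refine le_trans ?_ (Finset.single_le_sum (f := fun k => ∑ i, ∑ j, qd Q k i j x * qd Q k i j x)
    (fun k _ => Finset.sum_nonneg fun i _ => Finset.sum_nonneg fun j _ => mul_self_nonneg _)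
    (Finset.mem_univ k))
  refine le_trans ?_ (Finset.single_le_sum (f := fun i => ∑ j, qd Q k i j x * qd Q k i j x)
    (fun i _ => Finset.sum_nonneg fun j _ => mul_self_nonneg _)
    (Finset.mem_univ i))
  exact (Finset.single_le_sum (f := fun j => qd Q k i j x * qd Q k i j x)
    (fun j _ => mul_self_nonneg _) (Finset.mem_univ j))

theorem Ts_int {F : Mat → ℝ} {Q : E3 → Mat} (hQ : ContDiff ℝ 2 Q)
    (hint1 : Integrable (fun x => gradNormSq Q x))
    (hint2 : Integrable (fun x => F (Q x))) (k l : Fin 3) : Integrable (Ts F Q k l) := by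
  unfold Ts
  have he : Integrable (ed F Q) := by
    unfold ed
    simp only [← gradNormSq_eq]
    exact (hint1.mul_const _).add hint2
  refine Integrable.sub ?_ (he.const_mul _)
  refine integrable_finsetSum _ fun i _ => integrable_finsetSum _ fun j _ => ?_
  refine hint1.mono' ((qd_cd hQ k i j).continuous.mul
    (qd_cd hQ l i j).continuous).aestronglyMeasurable (Filter.Eventually.of_forall fun x => ?_)
  rw [Real.norm_eq_abs, abs_le]
  have h1 := qd_sq_le Q k i j x
  have h2 := qd_sq_le Q l i j x
  constructor <;> nlinarith [mul_self_nonneg (qd Q k i j x + qd Q l i j x),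
    mul_self_nonneg (qd Q k i j x - qd Q l i j x)]

theorem Ts_trace (F : Mat → ℝ) (Q : E3 → Mat) (x : E3) :
    ∑ k, ∑ l, Ts F Q k l x * (if k = l then 1 else 0) = 
      -((1 : ℝ) / 2 * gradNormSq Q x + 3 * F (Q x)) := by
  simp only [mul_ite, mul_one, mul_zero, Finset.sum_ite_eq, Finset.mem_univ, if_true, Ts,
    one_mul, Finset.sum_sub_distrib, Finset.sum_const, Finset.card_univ, Fintype.card_fin, ed,
    ← gradNormSq_eq, nsmul_eq_mul]
  push_cast
  ring

/-- cutoff existence -/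
theorem exists_cutoff (l : Fin 3) : ∃ ψ : E3 → ℝ, ContDiff ℝ 1 ψ ∧ HasCompactSupport ψ ∧
    ∀ k, pd k ψ 0 = if k = l then 1 else 0 := by
  let b : ContDiffBump (0 : E3) := ⟨1, 2, by norm_num, by norm_num⟩
  have hl : ContDiff ℝ 1 (fun x : E3 => x l) := by fun_prop
  refine ⟨fun x => b x * x l, b.contDiff.mul hl, b.hasCompactSupport.mul_right, fun k => ?_⟩
  have hev : (fun x => b x * x l) =ᶠ[nhds (0:E3)] fun x => x l := by
    filter_upwards [b.eventuallyEq_one] with x hx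
    simp [hx]
  have hd : HasFDerivAt (fun x : E3 => x l) (EuclideanSpace.proj (𝕜 := ℝ) l) 0 :=
    (EuclideanSpace.proj (𝕜 := ℝ) l : E3 →L[ℝ] ℝ).hasFDerivAt
  unfold pd
  rw [hev.fderiv_eq, hd.fderiv]
  simp [eq_comm]

theorem pd_cont (k : Fin 3) {f : E3 → ℝ} (hf : ContDiff ℝ 1 f) : Continuous (pd k f) :=
  (hf.continuous_fderiv (by norm_num)).clm_apply continuous_const

theorem pd_cs (k : Fin 3) {f : E3 → ℝ} (hf : HasCompactSupport f) : HasCompactSupport (pd k f) :=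
  hf.fderiv_apply (𝕜 := ℝ) _

theorem scaled {F : Mat → ℝ} (hF : ContDiff ℝ 2 F) {Q : E3 → Mat} (hQ : ContDiff ℝ 2 Q)
    (htr : ∀ x, Matrix.trace (Q x) = 0)
    (heq : ∀ x, -lapM Q x + tracelessPart (matGrad F (Q x)) = 0) (l : Fin 3)
    {ψ : E3 → ℝ} (hψ : ContDiff ℝ 1 ψ) (hc : HasCompactSupport ψ) {c : ℝ} (hc0 : c ≠ 0) :
    ∑ k, ∫ x, Ts F Q k l x * pd k ψ (c • x) = 0 := by
  let g : E3 → ℝ := fun x => ψ (c • x)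
  have hg : ContDiff ℝ 1 g := hψ.comp (contDiff_const_smul c)
  have hgc : HasCompactSupport g := hc.comp_homeomorph (Homeomorph.smulOfNeZero c hc0)
  have hpg : ∀ k x, pd k g x = c * pd k ψ (c • x) := by
    intro k x
    have h1 : HasFDerivAt g ((fderiv ℝ ψ (c • x)).comp (c • ContinuousLinearMap.id ℝ E3)) x :=
      HasFDerivAt.comp x ((hψ.differentiable (by norm_num)) (c • x)).hasFDerivAt
        ((hasFDerivAt_id x).const_smul c)
    unfold pd
    rw [h1.fderiv]
    simp
  have hT := Ts_cd hF hQ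
  have i1 : ∀ k, Integrable (fun x => pd k (Ts F Q k l) x * g x) := fun k =>
    ((pd_cont k (hT k l)).mul hg.continuous).integrable_of_hasCompactSupport hgc.mul_left
  have ibp : ∀ k, ∫ x, Ts F Q k l x * pd k g x = - ∫ x, pd k (Ts F Q k l) x * g x := by
    intro k
    refine integral_mul_fderiv_eq_neg_fderiv_mul_of_integrable (i1 k) ?_ ?_
      (fun x _ => (hT k l).differentiable (by norm_num) x)
      (fun x _ => hg.differentiable (by norm_num) x)
    · exact ((hT k l).continuous.mul (pd_cont k hg)).integrable_of_hasCompactSupport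
        (pd_cs k hgc).mul_left
    · exact ((hT k l).continuous.mul hg.continuous).integrable_of_hasCompactSupport hgc.mul_left
  have h0 : ∑ k, ∫ x, Ts F Q k l x * pd k g x = 0 := by
    simp only [ibp, Finset.sum_neg_distrib]
    rw [← integral_finsetSum _ (fun k _ => i1 k)]
    simp only [← Finset.sum_mul, Ts_div hF hQ htr heq l, zero_mul, integral_zero, neg_zero]
  have h1 : ∀ k, ∫ x, Ts F Q k l x * pd k g x = c * ∫ x, Ts F Q k l x * pd k ψ (c • x) := by
    intro k
    rw [← integral_const_mul]
    congr 1; funext x; rw [hpg]; ring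
  simp only [h1, ← Finset.mul_sum] at h0
  exact (mul_eq_zero.1 h0).resolve_left hc0

theorem limit_id {F : Mat → ℝ} (hF : ContDiff ℝ 2 F) {Q : E3 → Mat} (hQ : ContDiff ℝ 2 Q)
    (htr : ∀ x, Matrix.trace (Q x) = 0)
    (heq : ∀ x, -lapM Q x + tracelessPart (matGrad F (Q x)) = 0)
    (hint1 : Integrable (fun x => gradNormSq Q x))
    (hint2 : Integrable (fun x => F (Q x))) (l : Fin 3) :
    ∑ k, ∫ x, Ts F Q k l x * (if k = l then 1 else 0) = 0 := by
  obtain ⟨ψ, hψ, hc, h0⟩ := exists_cutoff l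
  have hlim : Filter.Tendsto (fun n : ℕ => ∑ k, ∫ x, Ts F Q k l x * pd k ψ ((1 / ((n:ℝ) + 1)) • x))
      Filter.atTop (nhds (∑ k, ∫ x, Ts F Q k l x * (if k = l then 1 else 0))) := by
    refine tendsto_finsetSum _ fun k _ => ?_
    obtain ⟨C, hC⟩ := (pd_cs k hc).exists_bound_of_continuous (pd_cont k hψ)
    have hi := Ts_int (F := F) hQ hint1 hint2 k l
    refine tendsto_integral_of_dominated_convergence (fun x => ‖Ts F Q k l x‖ * C) ?_
      (hi.norm.mul_const C) ?_ ?_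
    · intro n
      exact ((Ts_cd hF hQ k l).continuous.mul
        ((pd_cont k hψ).comp (continuous_const_smul _))).aestronglyMeasurable
    · intro n
      refine Filter.Eventually.of_forall fun x => ?_
      rw [norm_mul]
      exact mul_le_mul_of_nonneg_left (hC _) (norm_nonneg _)
    · refine Filter.Eventually.of_forall fun x => ?_
      refine Filter.Tendsto.const_mul _ ?_
      rw [← h0 k]
      refine ((pd_cont k hψ).tendsto 0).comp ?_
      simpa using (tendsto_one_div_add_atTop_nhds_zero_nat (𝕜 := ℝ)).smul_const x
  have hz : ∀ n : ℕ, ∑ k, ∫ x, Ts F Q k l x * pd k ψ ((1 / ((n:ℝ) + 1)) • x) = 0 := fun n =>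
    scaled hF hQ htr heq l hψ hc (by positivity)
  simp only [hz] at hlim
  exact (tendsto_nhds_unique hlim tendsto_const_nhds)

/-- **Pochožaev identity.** If `F` is `C²` with `F 0 = 0`, and `Q : ℝ³ → ℝ^{3×3}`
is a `C²` symmetric traceless solution of `-ΔQ + L[∇F(Q)] = 0` with `|Q| ≤ r₂` pointwise and
`|∇Q|², F(Q)` integrable, then `∫_{ℝ³} ( (1/2)|∇Q|² + 3 F(Q) ) dx = 0`. -/
theorem stmt1 (r₂ : ℝ) (hr₂ : 0 < r₂) (F : Mat → ℝ) (hF : ContDiff ℝ 2 F) (hF0 : F 0 = 0)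
    (Q : E3 → Mat) (hQ : ContDiff ℝ 2 Q)
    (hsym : ∀ x, (Q x)ᵀ = Q x) (htr : ∀ x, Matrix.trace (Q x) = 0)
    (hbd : ∀ x, frobNorm (Q x) ≤ r₂)
    (heq : ∀ x, -lapM Q x + tracelessPart (matGrad F (Q x)) = 0)
    (hint1 : Integrable (fun x => gradNormSq Q x))
    (hint2 : Integrable (fun x => F (Q x))) :
    ∫ x : E3, ((1 : ℝ) / 2 * gradNormSq Q x + 3 * F (Q x)) = 0 := by
  have hi : ∀ k l, Integrable (fun x => Ts F Q k l x * (if k = l then 1 else 0)) := fun k l =>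
    (Ts_int hQ hint1 hint2 k l).mul_const _
  have h : ∑ l, ∑ k, ∫ x, Ts F Q k l x * (if k = l then 1 else 0) = 0 :=
    Finset.sum_eq_zero fun l _ => limit_id hF hQ htr heq hint1 hint2 l
  rw [Finset.sum_comm] at h
  have h2 : ∫ x, ∑ k, ∑ l, Ts F Q k l x * (if k = l then 1 else 0) = 0 := by
    rw [integral_finsetSum _ (fun k _ => integrable_finsetSum _ fun l _ => hi k l)]
    refine Eq.trans ?_ h
    refine Finset.sum_congr rfl fun k _ => ?_
    rw [integral_finsetSum _ (fun l _ => hi k l)]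
  simp only [Ts_trace, integral_neg] at h2
  exact neg_eq_zero.1 h2
end
end

section
/- Let n ≥ 1, let F : ℝⁿ → ℝ be twice continuously differentiable with F(0) = 0, and suppose there exist λ > 0 and r > 0 such that F(x) ≥ λ |x|² for all x with |x| ≤ r. Then there exists r' ∈ (0, r] such that ⟨∇F(x), x⟩ ≥ F(x) for all x with |x| ≤ r'. -/
/-- Let `n ≥ 1` and `F : ℝⁿ → ℝ` be `C²` with `F 0 = 0`. If there are
`λ > 0` and `r > 0` with `F x ≥ λ |x|²` for all `|x| ≤ r`, then there is `r' ∈ (0, r]`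
such that `⟨∇F x, x⟩ ≥ F x` whenever `|x| ≤ r'`. -/
theorem stmt11 (n : ℕ) (hn : 1 ≤ n) (F : EuclideanSpace ℝ (Fin n) → ℝ)
    (hF : ContDiff ℝ 2 F) (hF0 : F 0 = 0)
    (lam r : ℝ) (hlam : 0 < lam) (hr : 0 < r)
    (hlower : ∀ x : EuclideanSpace ℝ (Fin n), ‖x‖ ≤ r → lam * ‖x‖ ^ 2 ≤ F x) :
    ∃ r' : ℝ, 0 < r' ∧ r' ≤ r ∧
      ∀ x : EuclideanSpace ℝ (Fin n), ‖x‖ ≤ r' →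
        F x ≤ (inner ℝ (gradient F x) x : ℝ) := by
  have hd : Differentiable ℝ F := hF.differentiable (by norm_num)
  have hG0 : fderiv ℝ F 0 = 0 := by
    apply IsLocalMin.fderiv_eq_zero
    filter_upwards [Metric.closedBall_mem_nhds (0 : EuclideanSpace ℝ (Fin n)) hr] with x hx
    have hx' : ‖x‖ ≤ r := by simpa using hx
    rw [hF0]
    exact le_trans (by positivity) (hlower x hx')
  have hG1 : ContDiff ℝ 1 (fderiv ℝ F) := hF.fderiv_right (by norm_num)
  have hGd : DifferentiableAt ℝ (fderiv ℝ F) 0 := hG1.differentiable (by norm_num) 0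
  obtain ⟨H, hH⟩ := hGd
  have hlit := (hasFDerivAt_iff_isLittleO_nhds_zero.1 hH).def (c := lam / 3) (by positivity)
  obtain ⟨d, hd0, hdb⟩ := Metric.eventually_nhds_iff.1 hlit
  refine ⟨min r (d / 2), by positivity, min_le_left _ _, fun x hx => ?_⟩
  have hxr : ‖x‖ ≤ r := hx.trans (min_le_left _ _)
  have hxd : ‖x‖ ≤ d / 2 := hx.trans (min_le_right _ _)
  have key : ∀ y : EuclideanSpace ℝ (Fin n), ‖y‖ ≤ ‖x‖ →
      |fderiv ℝ F y x - H y x| ≤ lam / 3 * ‖x‖ ^ 2 := by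
    intro y hy
    have h1 : ‖fderiv ℝ F y - H y‖ ≤ lam / 3 * ‖y‖ := by
      have := hdb (y := y) (by rw [dist_zero_right]; linarith)
      simpa [hG0] using this
    have h2 := (fderiv ℝ F y - H y).le_opNorm x
    rw [ContinuousLinearMap.sub_apply, Real.norm_eq_abs] at h2
    calc _ ≤ _ := h2
      _ ≤ (lam / 3 * ‖x‖) * ‖x‖ := by
        gcongr
        exact h1.trans (by gcongr)
      _ = _ := by ring
  have hderiv : ∀ t : ℝ, HasDerivAt (fun t : ℝ => F (t • x) - t ^ 2 / 2 * H x x)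
      (fderiv ℝ F (t • x) x - H (t • x) x) t := by
    intro t
    have h1 : HasDerivAt (fun t : ℝ => t • x) x t := by
      simpa using (hasDerivAt_id t).smul_const x
    have h2 := (hd (t • x)).hasFDerivAt.comp_hasDerivAt t h1
    have h3 : HasDerivAt (fun t : ℝ => t ^ 2 / 2 * H x x) (t * H x x) t := by
      have := (((hasDerivAt_id t).pow 2).div_const 2).mul_const (H x x)
      refine this.congr_deriv ?_
      simp
    have h4 := h2.sub h3
    refine h4.congr_deriv ?_
    simp
  have hmv := norm_image_sub_le_of_norm_deriv_le_segment_01'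
    (C := lam / 3 * ‖x‖ ^ 2) (fun t _ => (hderiv t).hasDerivWithinAt) (by
      intro t ht
      rw [Real.norm_eq_abs]
      apply key
      rw [norm_smul, Real.norm_eq_abs, abs_of_nonneg ht.1]
      exact mul_le_of_le_one_left (norm_nonneg _) ht.2.le)
  simp only [one_smul, zero_smul, hF0, Real.norm_eq_abs] at hmv
  have a1 := (abs_le.1 hmv).2
  have a2 := (abs_le.1 (key x le_rfl)).1
  have a3 := hlower x hxr
  have a4 : (inner ℝ (gradient F x) x : ℝ) = fderiv ℝ F x x := by
    simp [gradient]
  rw [a4]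
  nlinarith
end
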